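/- Let X, Y be natural numbers with Y ≥ 1, let ε > 0, let L₁, L₂ be independent random variables with L₁, L₂ ~ Lap(2/ε), and set Z̃ = (X + L₁)/max(Y + L₂, 1). Then E[Z̃] = X·( (1/2)·exp(ε·(1 − Y)/2) + (ε/4)·exp(−ε·Y/2)·∫_{ε/2}^{ε·Y/2} (e^t/t) dt − (ε/4)·exp(ε·Y/2)·∫_{−∞}^{−ε·Y/2} (e^t/t) dt ). -/

import Mathlib

open MeasureTheory ProbabilityTheory Filter

/-- The Laplace distribution on `ℝ` with location `μ` and scale `b`,
given by the density `x ↦ (1/(2b)) * exp (-|x - μ| / b)`. -/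
noncomputable def laplaceMeasure (μ b : ℝ) : Measure ℝ :=
  MeasureTheory.volume.withDensity
    fun x => ENNReal.ofReal ((1 / (2 * b)) * Real.exp (-|x - μ| / b))

/-!
By independence the expectation is the product of the mean of the numerator, which is `X`, and
`E[1 / D]` with `D = max (Y + L₂) 1`. The latter is computed from the `Lap(Y, b)` density of
`Y + L₂`, where `b = 2 / ε`, cutting `ℝ` at the clamping threshold and at the mode `Y`. Below the
threshold `D` is constant, which leaves a value of the Laplace distribution function. On the other
two pieces `|x - Y|` is affine, so that rescaling by `± b` turns `exp (-|x - Y| / b) / x` into a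
multiple of `exp t / t`.
-/

lemma norm_inv_max_le_inv {c : ℝ} (hc : 0 < c) (x : ℝ) : ‖(max x c)⁻¹‖ ≤ c⁻¹ := by
  have hmax : c ≤ max x c := le_max_right x c
  rw [norm_inv, Real.norm_of_nonneg (hc.le.trans hmax)]
  exact inv_anti₀ hc hmax

section LaplaceMeasure

variable {μ b c : ℝ}

lemma setIntegral_laplaceMeasure {E : Type*} [NormedAddCommGroup E] [NormedSpace ℝ E]
    (hb : 0 ≤ b) {s : Set ℝ} (hs : MeasurableSet s) (f : ℝ → E) :
    ∫ x in s, f x ∂laplaceMeasure μ b =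
      ∫ x in s, (1 / (2 * b) * Real.exp (-|x - μ| / b)) • f x := by
  rw [laplaceMeasure, setIntegral_withDensity_eq_setIntegral_toReal_smul (by fun_prop)
    (ae_of_all _ fun _ ↦ ENNReal.ofReal_lt_top) f hs]
  refine setIntegral_congr_fun hs fun x _ ↦ ?_
  rw [ENNReal.toReal_ofReal (by positivity)]

lemma integral_laplaceMeasure {E : Type*} [NormedAddCommGroup E] [NormedSpace ℝ E]
    (hb : 0 ≤ b) (f : ℝ → E) :
    ∫ x, f x ∂laplaceMeasure μ b = ∫ x, (1 / (2 * b) * Real.exp (-|x - μ| / b)) • f x := by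
  simpa only [setIntegral_univ] using setIntegral_laplaceMeasure hb MeasurableSet.univ f

lemma map_const_add_laplaceMeasure (a : ℝ) :
    (laplaceMeasure μ b).map (a + ·) = laplaceMeasure (μ + a) b := by
  ext s hs
  have hpre : MeasurableSet ((a + ·) ⁻¹' s) := measurable_const_add a hs
  rw [Measure.map_apply (measurable_const_add a) hs, laplaceMeasure, laplaceMeasure,
    withDensity_apply _ hpre, withDensity_apply _ hs,
    ← (measurePreserving_add_left volume a).setLIntegral_comp_preimage hs (by fun_prop)]
  simp only [add_comm μ a, add_sub_add_left_eq_sub]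

lemma hasLaw_const_add_laplaceMeasure {Ω : Type*} [MeasurableSpace Ω] {P : Measure Ω} {L : Ω → ℝ}
    (hL : HasLaw L (laplaceMeasure μ b) P) (a : ℝ) :
    HasLaw (fun ω ↦ a + L ω) (laplaceMeasure (μ + a) b) P :=
  HasLaw.comp ⟨by fun_prop, map_const_add_laplaceMeasure a⟩ hL

lemma integral_comp_abs_sub_laplaceMeasure (hb : 0 ≤ b) (f : ℝ → ℝ) :
    ∫ x, f |x - μ| ∂laplaceMeasure μ b =
      b⁻¹ * ∫ x in Set.Ioi 0, Real.exp (-x / b) * f x := by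
  calc ∫ x, f |x - μ| ∂laplaceMeasure μ b
      = ∫ x, 1 / (2 * b) * (Real.exp (-|x - μ| / b) * f |x - μ|) := by
        simp only [integral_laplaceMeasure hb, smul_eq_mul, mul_assoc]
    _ = 1 / (2 * b) * ∫ x, Real.exp (-|x| / b) * f |x| := by
        rw [integral_const_mul,
          integral_sub_right_eq_self (fun x ↦ Real.exp (-|x| / b) * f |x|) μ]
    _ = b⁻¹ * ∫ x in Set.Ioi 0, Real.exp (-x / b) * f x := by
        rw [integral_comp_abs (f := fun x ↦ Real.exp (-x / b) * f x)]
        ring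

lemma isProbabilityMeasure_laplaceMeasure (hb : 0 < b) :
    IsProbabilityMeasure (laplaceMeasure μ b) := by
  have hmass : (laplaceMeasure μ b).real Set.univ = 1 := by
    have h := integral_comp_abs_sub_laplaceMeasure (μ := μ) hb.le fun _ ↦ 1
    have hexp : ∫ x in Set.Ioi 0, Real.exp (-x / b) = b := by
      simpa [neg_div, div_eq_inv_mul] using integral_exp_mul_Ioi (neg_lt_zero.2 (inv_pos.2 hb)) 0
    simpa [hexp, hb.ne'] using h
  exact ⟨ENNReal.toReal_eq_one_iff _ |>.1 hmass⟩

lemma integral_abs_sub_laplaceMeasure (hb : 0 < b) :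
    ∫ x, |x - μ| ∂laplaceMeasure μ b = b := by
  have hgamma : ∫ x in Set.Ioi 0, Real.exp (-x / b) * x = b ^ 2 := by
    have h := Real.integral_rpow_mul_exp_neg_mul_Ioi two_pos (inv_pos.2 hb)
    simp only [show (2 : ℝ) - 1 = 1 by norm_num, Real.rpow_one, one_div, inv_inv, Real.rpow_two,
      Real.Gamma_two, mul_one] at h
    rw [← h]
    refine setIntegral_congr_fun measurableSet_Ioi fun x _ ↦ ?_
    rw [mul_comm, neg_div, div_eq_inv_mul]
  rw [integral_comp_abs_sub_laplaceMeasure hb.le fun x ↦ x, hgamma]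
  field_simp

lemma integrable_id_laplaceMeasure (hb : 0 < b) :
    Integrable (fun x ↦ x) (laplaceMeasure μ b) := by
  have := isProbabilityMeasure_laplaceMeasure (μ := μ) hb
  have habs : Integrable (fun x ↦ |x - μ|) (laplaceMeasure μ b) :=
    Integrable.of_integral_ne_zero ((integral_abs_sub_laplaceMeasure hb).trans_ne hb.ne')
  have hsub : Integrable (fun x ↦ x - μ) (laplaceMeasure μ b) :=
    (integrable_norm_iff (by fun_prop)).1 habs
  exact (hsub.add (integrable_const μ)).congr (ae_of_all _ fun x ↦ sub_add_cancel x μ)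

lemma integral_id_laplaceMeasure (hb : 0 < b) : ∫ x, x ∂laplaceMeasure μ b = μ := by
  have := isProbabilityMeasure_laplaceMeasure (μ := μ) hb
  have hcentered : ∫ x, (x - μ) ∂laplaceMeasure μ b = 0 := by
    rw [integral_laplaceMeasure hb.le]
    have hreflect := integral_sub_left_eq_self
      (fun x ↦ (1 / (2 * b) * Real.exp (-|x - μ| / b)) • (x - μ)) volume (2 * μ)
    have hodd (x : ℝ) : 2 * μ - x - μ = -(x - μ) := by ring
    simp only [hodd, abs_neg, smul_neg, integral_neg] at hreflect
    linarith
  rw [integral_sub (integrable_id_laplaceMeasure hb) (integrable_const μ)] at hcentered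
  simpa [sub_eq_zero] using hcentered

lemma laplaceMeasure_real_Iic_of_le (hb : 0 < b) (hc : c ≤ μ) :
    (laplaceMeasure μ b).real (Set.Iic c) = 1 / 2 * Real.exp ((c - μ) / b) := by
  calc (laplaceMeasure μ b).real (Set.Iic c)
      = ∫ x in Set.Iic c, 1 / (2 * b) * Real.exp (-|x - μ| / b) := by
        simpa using setIntegral_laplaceMeasure hb.le measurableSet_Iic fun _ ↦ (1 : ℝ)
    _ = ∫ x in Set.Iic c, 1 / (2 * b) * Real.exp (-μ / b) * Real.exp (b⁻¹ * x) := by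
        refine setIntegral_congr_fun measurableSet_Iic fun x hx ↦ ?_
        rw [abs_of_nonpos (sub_nonpos.2 (hx.trans hc)), mul_assoc, ← Real.exp_add]
        ring_nf
    _ = 1 / 2 * Real.exp ((c - μ) / b) := by
        rw [integral_const_mul, integral_exp_mul_Iic (inv_pos.2 hb),
          show (c - μ) / b = -μ / b + b⁻¹ * c by ring, Real.exp_add]
        field_simp

lemma setIntegral_Ioc_inv_laplaceMeasure (hb : 0 < b) (hc : c ≤ μ) :
    ∫ x in Set.Ioc c μ, x⁻¹ ∂laplaceMeasure μ b =
      1 / (2 * b) * Real.exp (-μ / b) * ∫ t in (c / b)..(μ / b), Real.exp t / t := by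
  calc ∫ x in Set.Ioc c μ, x⁻¹ ∂laplaceMeasure μ b
      = ∫ x in Set.Ioc c μ,
          1 / (2 * b) * Real.exp (-μ / b) * (b⁻¹ * (Real.exp (x / b) / (x / b))) := by
        rw [setIntegral_laplaceMeasure hb.le measurableSet_Ioc]
        refine setIntegral_congr_fun measurableSet_Ioc fun x hx ↦ ?_
        have hexp : Real.exp (-|x - μ| / b) = Real.exp (-μ / b) * Real.exp (x / b) := by
          rw [abs_of_nonpos (sub_nonpos.2 hx.2), ← Real.exp_add]
          ring_nf
        simp only [hexp, smul_eq_mul]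
        field_simp
    _ = 1 / (2 * b) * Real.exp (-μ / b) * ∫ t in (c / b)..(μ / b), Real.exp t / t := by
        rw [integral_const_mul, integral_const_mul, ← intervalIntegral.integral_of_le hc,
          ← smul_eq_mul b⁻¹,
          intervalIntegral.inv_smul_integral_comp_div (fun t ↦ Real.exp t / t)]

lemma setIntegral_Ioi_inv_laplaceMeasure (hb : 0 < b) :
    ∫ x in Set.Ioi μ, x⁻¹ ∂laplaceMeasure μ b =
      -(1 / (2 * b) * Real.exp (μ / b) * ∫ t in Set.Iic (-μ / b), Real.exp t / t) := by
  calc ∫ x in Set.Ioi μ, x⁻¹ ∂laplaceMeasure μ b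
      = ∫ x in Set.Ioi μ, -(1 / (2 * b) * Real.exp (μ / b)) *
          (b⁻¹ * (Real.exp (-(b⁻¹ * x)) / -(b⁻¹ * x))) := by
        rw [setIntegral_laplaceMeasure hb.le measurableSet_Ioi]
        refine setIntegral_congr_fun measurableSet_Ioi fun x hx ↦ ?_
        have hexp : Real.exp (-|x - μ| / b) = Real.exp (μ / b) * Real.exp (-(b⁻¹ * x)) := by
          rw [abs_of_pos (sub_pos.2 hx), ← Real.exp_add]
          ring_nf
        simp only [hexp, smul_eq_mul]
        field_simp
    _ = -(1 / (2 * b) * Real.exp (μ / b)) *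
          ∫ t in Set.Ioi (b⁻¹ * μ), Real.exp (-t) / -t := by
        rw [integral_const_mul, integral_const_mul, ← smul_eq_mul b⁻¹,
          integral_comp_mul_left_Ioi (fun t ↦ Real.exp (-t) / -t) μ (inv_pos.2 hb),
          inv_inv, inv_smul_smul₀ hb.ne']
    _ = -(1 / (2 * b) * Real.exp (μ / b) * ∫ t in Set.Iic (-μ / b), Real.exp t / t) := by
        rw [integral_comp_neg_Ioi (b⁻¹ * μ) fun t ↦ Real.exp t / t, ← div_eq_inv_mul, neg_div,
          neg_mul]

lemma integral_inv_max_laplaceMeasure (hb : 0 < b) (hc : 0 < c) (hcμ : c ≤ μ) :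
    ∫ x, (max x c)⁻¹ ∂laplaceMeasure μ b =
      1 / (2 * c) * Real.exp ((c - μ) / b) +
        1 / (2 * b) * Real.exp (-μ / b) * (∫ t in (c / b)..(μ / b), Real.exp t / t) -
        1 / (2 * b) * Real.exp (μ / b) * ∫ t in Set.Iic (-μ / b), Real.exp t / t := by
  have := isProbabilityMeasure_laplaceMeasure (μ := μ) hb
  have hint : Integrable (fun x ↦ (max x c)⁻¹) (laplaceMeasure μ b) :=
    .of_bound (Measurable.aestronglyMeasurable (by fun_prop)) c⁻¹
      (ae_of_all _ (norm_inv_max_le_inv hc))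
  have hIic : ∫ x in Set.Iic c, (max x c)⁻¹ ∂laplaceMeasure μ b =
      1 / (2 * c) * Real.exp ((c - μ) / b) := by
    rw [setIntegral_congr_fun (g := fun _ ↦ c⁻¹) measurableSet_Iic
      fun x hx ↦ congrArg (·⁻¹) (max_eq_right hx), setIntegral_const,
      laplaceMeasure_real_Iic_of_le hb hcμ, smul_eq_mul]
    ring
  have hIoc : ∫ x in Set.Ioc c μ, (max x c)⁻¹ ∂laplaceMeasure μ b =
      ∫ x in Set.Ioc c μ, x⁻¹ ∂laplaceMeasure μ b :=
    setIntegral_congr_fun measurableSet_Ioc fun x hx ↦ congrArg (·⁻¹) (max_eq_left hx.1.le)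
  have hIoi : ∫ x in Set.Ioi μ, (max x c)⁻¹ ∂laplaceMeasure μ b =
      ∫ x in Set.Ioi μ, x⁻¹ ∂laplaceMeasure μ b :=
    setIntegral_congr_fun measurableSet_Ioi fun x hx ↦
      congrArg (·⁻¹) (max_eq_left (hcμ.trans (Set.mem_Ioi.1 hx).le))
  rw [← intervalIntegral.integral_Iic_add_Ioi (b := c) hint.integrableOn hint.integrableOn,
    ← Set.Ioc_union_Ioi_eq_Ioi hcμ, setIntegral_union (Set.Ioc_disjoint_Ioi le_rfl)
      measurableSet_Ioi hint.integrableOn hint.integrableOn,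
    hIic, hIoc, hIoi, setIntegral_Ioc_inv_laplaceMeasure hb hcμ,
    setIntegral_Ioi_inv_laplaceMeasure hb]
  ring

end LaplaceMeasure

section Ratio

variable {Ω : Type*} [MeasurableSpace Ω] {P : Measure Ω} {c : ℝ}

lemma integrable_div_max {N D : Ω → ℝ} (hc : 0 < c) (hN : Integrable N P)
    (hD : AEMeasurable D P) : Integrable (fun ω ↦ N ω / max (D ω) c) P := by
  simp only [div_eq_mul_inv]
  exact hN.mul_bdd (AEMeasurable.aestronglyMeasurable (by fun_prop))
    (ae_of_all _ fun ω ↦ norm_inv_max_le_inv hc (D ω))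

lemma integral_div_max_of_indepFun {N D : Ω → ℝ} (hN : AEMeasurable N P)
    (hD : AEMeasurable D P) (hindep : IndepFun N D P) :
    ∫ ω, N ω / max (D ω) c ∂P = (∫ ω, N ω ∂P) * ∫ x, (max x c)⁻¹ ∂P.map D := by
  have hinv : AEStronglyMeasurable (fun x ↦ (max x c)⁻¹) (P.map D) :=
    Measurable.aestronglyMeasurable (by fun_prop)
  rw [integral_map hD hinv]
  simp only [div_eq_mul_inv]
  exact hindep.integral_fun_comp_mul_comp (f := fun x ↦ x) hN hD (by fun_prop) hinv

theorem expectation_maxed_ratio_noisedCounts_general {x y ε : ℝ} {L₁ L₂ : Ω → ℝ}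
    (hc : 0 < c) (hcy : c ≤ y) (hε : 0 < ε) (hL₁ : Integrable L₁ P)
    (hL₁_mean : ∫ ω, L₁ ω ∂P = 0) (hL₂ : HasLaw L₂ (laplaceMeasure 0 (2 / ε)) P)
    (hindep : IndepFun L₁ L₂ P) :
    Integrable (fun ω ↦ (x + L₁ ω) / max (y + L₂ ω) c) P ∧
    ∫ ω, (x + L₁ ω) / max (y + L₂ ω) c ∂P =
      x * ((1 / (2 * c)) * Real.exp (ε * (c - y) / 2) +
        (ε / 4) * Real.exp (-(ε * y) / 2) *
          (∫ t in (ε * c / 2)..(ε * y / 2), Real.exp t / t) -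
        (ε / 4) * Real.exp (ε * y / 2) *
          (∫ t in Set.Iic (-(ε * y) / 2), Real.exp t / t)) := by
  have hb : 0 < 2 / ε := by positivity
  have := isProbabilityMeasure_laplaceMeasure (μ := 0) hb
  have := hL₂.isProbabilityMeasure
  have hN : Integrable (fun ω ↦ x + L₁ ω) P := (integrable_const x).add hL₁
  have hN_mean : ∫ ω, (x + L₁ ω) ∂P = x := by
    simp [integral_add (integrable_const x) hL₁, hL₁_mean]
  have hD : HasLaw (fun ω ↦ y + L₂ ω) (laplaceMeasure y (2 / ε)) P := by
    simpa only [zero_add] using hasLaw_const_add_laplaceMeasure hL₂ y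
  have hND : IndepFun (fun ω ↦ x + L₁ ω) (fun ω ↦ y + L₂ ω) P :=
    hindep.comp (measurable_const_add x) (measurable_const_add y)
  refine ⟨integrable_div_max hc hN hD.aemeasurable, ?_⟩
  rw [integral_div_max_of_indepFun hN.aemeasurable hD.aemeasurable hND, hN_mean, hD.map_eq,
    integral_inv_max_laplaceMeasure hb hc hcy]
  have hscale (z : ℝ) : z / (2 / ε) = ε * z / 2 := by field_simp
  have hcoeff : 1 / (2 * (2 / ε)) = ε / 4 := by field_simp; norm_num
  simp only [hscale, hcoeff, mul_neg]

end Ratio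

/-- **Exact expectation (bias) of the maxed ratio of Laplace-noised counts.**
For counts `X, Y` with `Y ≥ 1` and independent `Lap(2/ε)` noises `L₁, L₂`, the
expectation of `(X + L₁) / max (Y + L₂) 1` equals the stated expression involving
differences of the exponential integral `Ei`. -/
theorem expectation_maxed_ratio_noisedCounts {Ω : Type*} [MeasurableSpace Ω]
    (P : Measure Ω) [IsProbabilityMeasure P]
    (X Y : ℕ) (hY : 1 ≤ Y) (ε : ℝ) (hε : 0 < ε)
    (L₁ L₂ : Ω → ℝ) (hm₁ : Measurable L₁) (hm₂ : Measurable L₂)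
    (hindep : IndepFun L₁ L₂ P)
    (hL₁ : Measure.map L₁ P = laplaceMeasure 0 (2 / ε))
    (hL₂ : Measure.map L₂ P = laplaceMeasure 0 (2 / ε)) :
    ∫ ω, ((X : ℝ) + L₁ ω) / max ((Y : ℝ) + L₂ ω) 1 ∂P =
      (X : ℝ) * ((1 / 2) * Real.exp (ε * (1 - (Y : ℝ)) / 2) +
        (ε / 4) * Real.exp (-(ε * (Y : ℝ)) / 2) *
          (∫ t in (ε / 2)..(ε * (Y : ℝ) / 2), Real.exp t / t) -
        (ε / 4) * Real.exp (ε * (Y : ℝ) / 2) *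
          (∫ t in Set.Iic (-(ε * (Y : ℝ)) / 2), Real.exp t / t)) := by
  have hlaw : HasLaw L₁ (laplaceMeasure 0 (2 / ε)) P := ⟨hm₁.aemeasurable, hL₁⟩
  have hb : 0 < 2 / ε := by positivity
  have hL₁_int : Integrable L₁ P :=
    (hL₁ ▸ integrable_id_laplaceMeasure hb).comp_measurable hm₁
  have hL₁_mean : ∫ ω, L₁ ω ∂P = 0 := hlaw.integral_eq.trans (integral_id_laplaceMeasure hb)
  simpa only [mul_one] using (expectation_maxed_ratio_noisedCounts_general one_pos (mod_cast hY)
    hε hL₁_int hL₁_mean ⟨hm₂.aemeasurable, hL₂⟩ hindep).2
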